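/- For every k ∈ ℕ and every γ > 0 there exists a constant C > 0 such that for every nondegenerate triangle T ⊂ ℝ² whose inradius is at least γ·h_T, where h_T denotes the diameter of T, and for every real polynomial q in two variables of total degree at most k, C⁻¹ ‖q‖_{L²(T)} ≤ ‖ψ_T q‖_{L²(T)} + h_T ‖∇(ψ_T q)‖_{L²(T)} ≤ C ‖q‖_{L²(T)}, where ψ_T := 27 λ₀ λ₁ λ₂ is the interior bubble function of T, ∇ denotes the (Euclidean norm of the) gradient, and the L²(T)-norms are taken with respect to two-dimensional Lebesgue measure restricted to T. -/

import Mathlib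

open MeasureTheory

namespace Bubble

abbrev E2 := EuclideanSpace ℝ (Fin 2)

/-- evaluation of a bivariate polynomial at a point of the Euclidean plane -/
noncomputable def ev (P : MvPolynomial (Fin 2) ℝ) (x : E2) : ℝ :=
  MvPolynomial.eval (fun i => x i) P

lemma continuous_ev (P : MvPolynomial (Fin 2) ℝ) : Continuous (ev P) := by
  unfold ev
  exact (MvPolynomial.continuous_eval P).comp (by fun_prop)

/-- coordinate projection -/
noncomputable def pr (i : Fin 2) : E2 →L[ℝ] ℝ := EuclideanSpace.proj i

lemma pr_apply (i : Fin 2) (x : E2) : pr i x = x i := rfl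

lemma hasFDerivAt_ev (P : MvPolynomial (Fin 2) ℝ) (x : E2) :
    HasFDerivAt (ev P) (ev (MvPolynomial.pderiv 0 P) x • pr 0
      + ev (MvPolynomial.pderiv 1 P) x • pr 1) x := by
  induction P using MvPolynomial.induction_on with
  | C a =>
    have : ev (MvPolynomial.C a) = fun _ => a := by ext y; simp [ev]
    rw [this]
    refine (hasFDerivAt_const a x).congr_fderiv ?_
    simp [ev]
  | add p q hp hq =>
    have : ev (p + q) = fun y => ev p y + ev q y := by ext y; simp [ev]
    rw [this]
    refine (hp.add hq).congr_fderiv ?_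
    simp only [ev, map_add]
    module
  | mul_X p i hp =>
    have : ev (p * MvPolynomial.X i) = fun y => ev p y * pr i y := by
      ext y; simp [ev, pr_apply]
    rw [this]
    refine (hp.mul (pr i).hasFDerivAt).congr_fderiv ?_
    fin_cases i
    · ext v
      simp [ev, pr_apply, MvPolynomial.pderiv_X]
      ring
    · ext v
      simp [ev, pr_apply, MvPolynomial.pderiv_X]
      ring

/-- reference triangle -/
def That : Set E2 := {x | 0 ≤ x 0 ∧ 0 ≤ x 1 ∧ x 0 + x 1 ≤ 1}

lemma isClosed_That : IsClosed That := by
  have h0 : IsClosed {x : E2 | 0 ≤ x 0} := isClosed_le (by fun_prop) (by fun_prop)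
  have h1 : IsClosed {x : E2 | 0 ≤ x 1} := isClosed_le (by fun_prop) (by fun_prop)
  have h2 : IsClosed {x : E2 | x 0 + x 1 ≤ 1} := isClosed_le (by fun_prop) (by fun_prop)
  exact h0.inter (h1.inter h2)

lemma isCompact_That : IsCompact That := by
  refine Metric.isCompact_of_isClosed_isBounded isClosed_That ?_
  refine (Metric.isBounded_closedBall (x := (0 : E2)) (r := 2)).subset ?_
  rintro x ⟨h0, h1, h2⟩
  rw [mem_closedBall_zero_iff, EuclideanSpace.norm_eq]
  apply Real.sqrt_le_iff.2
  simp only [Fin.sum_univ_two, Real.norm_eq_abs, sq_abs]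
  constructor
  · norm_num
  · nlinarith

lemma convex_That : Convex ℝ That := by
  rintro x ⟨hx0, hx1, hx2⟩ y ⟨hy0, hy1, hy2⟩ a b ha hb hab
  refine ⟨?_, ?_, ?_⟩
  · simp; positivity
  · simp; positivity
  · simp; nlinarith

/-- restricted Lebesgue measure -/
noncomputable def mu : Measure E2 := volume.restrict That

instance : IsFiniteMeasure mu := by
  unfold mu
  exact ⟨by simpa using isCompact_That.measure_lt_top⟩

lemma memLp_cont {f : E2 → ℝ} (hf : Continuous f) (p : ENNReal) : MemLp f p mu := by
  obtain ⟨C, hC⟩ := isCompact_That.exists_bound_of_continuousOn hf.continuousOn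
  refine MemLp.of_bound hf.aestronglyMeasurable C ?_
  exact (ae_restrict_iff' isClosed_That.measurableSet).2 (Filter.Eventually.of_forall hC)

lemma integrable_cont {f : E2 → ℝ} (hf : Continuous f) : Integrable f mu :=
  memLp_one_iff_integrable.1 (memLp_cont hf 1)

/-- the polynomial as an element of L² of the reference triangle -/
noncomputable def evL : MvPolynomial (Fin 2) ℝ →ₗ[ℝ] Lp ℝ 2 mu where
  toFun P := (memLp_cont (continuous_ev P) 2).toLp (ev P)
  map_add' P Q := by
    rw [← MemLp.toLp_add]
    congr 1
    ext x; simp [ev]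
  map_smul' c P := by
    simp only [RingHom.id_apply]
    rw [← MemLp.toLp_const_smul]
    congr 1
    ext x; simp [ev]

lemma norm_evL (P : MvPolynomial (Fin 2) ℝ) : ‖evL P‖ ^ 2 = ∫ x, ev P x ^ 2 ∂mu := by
  rw [← real_inner_self_eq_norm_sq, L2.inner_def]
  apply integral_congr_ae
  filter_upwards [(memLp_cont (continuous_ev P) 2).coeFn_toLp] with x hx
  have : (evL P : E2 → ℝ) x = ev P x := hx
  rw [this]
  simp [sq]

lemma evL_injective : Function.Injective evL := by
  rw [injective_iff_map_eq_zero]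
  intro P hP
  have h1 : ev P =ᵐ[mu] fun _ => 0 := by
    have h := (memLp_cont (continuous_ev P) 2).coeFn_toLp
    have h' : (memLp_cont (continuous_ev P) 2).toLp (ev P) = 0 := hP
    rw [h'] at h
    exact h.symm.trans (Lp.coeFn_zero ..)
  let U : Set E2 := {x | 0 < x 0 ∧ 0 < x 1 ∧ x 0 + x 1 < 1}
  have hU : IsOpen U := by
    have h0 : IsOpen {x : E2 | 0 < x 0} := isOpen_lt (by fun_prop) (by fun_prop)
    have h1 : IsOpen {x : E2 | 0 < x 1} := isOpen_lt (by fun_prop) (by fun_prop)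
    have h2 : IsOpen {x : E2 | x 0 + x 1 < 1} := isOpen_lt (by fun_prop) (by fun_prop)
    exact h0.inter (h1.inter h2)
  have hUT : U ⊆ That := fun x hx => ⟨hx.1.le, hx.2.1.le, hx.2.2.le⟩
  have h2 : Set.EqOn (ev P) (fun _ => 0) U :=
    Measure.eqOn_open_of_ae_eq (μ := volume) (ae_restrict_of_ae_restrict_of_subset hUT h1) hU
      (continuous_ev P).continuousOn continuousOn_const
  refine MvPolynomial.funext_set (fun _ => Set.Ioo (0:ℝ) (1/2))
    (fun _ => Set.Ioo_infinite (by norm_num)) ?_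
  intro x hx
  have hx0 := hx 0 trivial
  have hx1 := hx 1 trivial
  have := h2 (x := WithLp.toLp 2 x) ⟨hx0.1, hx1.1, by have := hx0.2; have := hx1.2; simp; linarith⟩
  simpa [ev] using this

lemma fin_bound (k : ℕ) (L₀ L₁ : MvPolynomial (Fin 2) ℝ →ₗ[ℝ] MvPolynomial (Fin 2) ℝ)
    (h₀ : Function.Injective L₀) : ∃ C : ℝ, 0 ≤ C ∧ ∀ q : MvPolynomial (Fin 2) ℝ,
      q.totalDegree ≤ k → ∫ x, ev (L₁ q) x ^ 2 ∂mu ≤ C * ∫ x, ev (L₀ q) x ^ 2 ∂mu := by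
  let V := MvPolynomial.restrictTotalDegree (Fin 2) ℝ k
  let M₀ : V →ₗ[ℝ] Lp ℝ 2 mu := evL ∘ₗ L₀ ∘ₗ V.subtype
  let M₁ : V →ₗ[ℝ] Lp ℝ 2 mu := evL ∘ₗ L₁ ∘ₗ V.subtype
  have hM : Function.Injective M₀ :=
    evL_injective.comp (h₀.comp V.injective_subtype)
  let e := LinearEquiv.ofInjective M₀ hM
  let N : LinearMap.range M₀ →L[ℝ] Lp ℝ 2 mu := LinearMap.toContinuousLinearMap (M₁ ∘ₗ e.symm.toLinearMap)
  refine ⟨‖N‖ ^ 2, by positivity, fun q hq => ?_⟩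
  let v : V := ⟨q, (MvPolynomial.mem_restrictTotalDegree _ _ _).2 hq⟩
  have h := N.le_opNorm (e v)
  have h1 : N (e v) = evL (L₁ q) := by simp [N, M₁, v]
  have h2 : ‖e v‖ = ‖evL (L₀ q)‖ := rfl
  rw [h1, h2] at h
  rw [← norm_evL, ← norm_evL, ← mul_pow]
  gcongr

lemma totalDegree_bind (q : MvPolynomial (Fin 2) ℝ) (f : Fin 2 → MvPolynomial (Fin 2) ℝ)
    (hf : ∀ i, (f i).totalDegree ≤ 1) : (MvPolynomial.bind₁ f q).totalDegree ≤ q.totalDegree := by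
  conv_lhs => rw [q.as_sum]
  rw [map_sum]
  refine MvPolynomial.totalDegree_finsetSum_le fun s hs => ?_
  rw [MvPolynomial.bind₁_monomial]
  refine (MvPolynomial.totalDegree_mul _ _).trans ?_
  rw [MvPolynomial.totalDegree_C, zero_add]
  refine (MvPolynomial.totalDegree_finsetProd _ _).trans ?_
  refine le_trans ?_ (MvPolynomial.le_totalDegree hs)
  refine Finset.sum_le_sum fun i _ => ?_
  refine (MvPolynomial.totalDegree_pow _ _).trans ?_
  simpa using Nat.mul_le_mul_left (s i) (hf i)

/-- the reference map onto the triangle with vertices `p`: linear part -/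
noncomputable def Alin (p : Fin 3 → E2) : E2 →L[ℝ] E2 :=
  (pr 0).smulRight (p 1 - p 0) + (pr 1).smulRight (p 2 - p 0)

/-- the reference map onto the triangle with vertices `p` -/
noncomputable def Phi (p : Fin 3 → E2) (x : E2) : E2 := Alin p x + p 0

lemma Phi_apply (p : Fin 3 → E2) (x : E2) :
    Phi p x = x 0 • (p 1 - p 0) + x 1 • (p 2 - p 0) + p 0 := by
  simp [Phi, Alin, pr_apply]

lemma image_Phi (p : Fin 3 → E2) : Phi p '' That = convexHull ℝ (Set.range p) := by
  apply Set.Subset.antisymm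
  · rintro _ ⟨x, ⟨h0, h1, h2⟩, rfl⟩
    have := (convex_convexHull ℝ (Set.range p)).sum_mem (t := Finset.univ)
      (w := ![1 - x 0 - x 1, x 0, x 1]) (z := p) ?_ ?_ ?_
    · convert this using 1
      rw [Phi_apply, Fin.sum_univ_three]
      simp only [Matrix.cons_val]
      module
    · intro i _
      fin_cases i
      · simp; linarith
      · simpa using h0
      · simpa using h1
    · rw [Fin.sum_univ_three]
      simp only [Matrix.cons_val]
      ring
    · intro i _
      exact subset_convexHull ℝ _ ⟨i, rfl⟩
  · apply convexHull_min
    · rintro _ ⟨i, rfl⟩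
      fin_cases i
      · refine ⟨!₂[0, 0], by simp [That], by simp [Phi_apply]⟩
      · refine ⟨!₂[1, 0], by simp [That], by simp [Phi_apply]⟩
      · refine ⟨!₂[0, 1], by simp [That], by simp [Phi_apply]⟩
    · have h := (convex_That.linear_image (Alin p).toLinearMap).translate (p 0)
      convert h using 1
      rw [Set.image_image]
      apply Set.image_congr
      intro x _
      simp [Phi, add_comm]

lemma lam_Phi (p : Fin 3 → E2) (l : E2 →ᵃ[ℝ] ℝ) (x : E2) :
    l (Phi p x) = l (p 0) + x 0 * (l (p 1) - l (p 0)) + x 1 * (l (p 2) - l (p 0)) := by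
  have h : Phi p x = (x 0 • (p 1 - p 0) + x 1 • (p 2 - p 0)) +ᵥ p 0 := Phi_apply p x
  have h1 : l.linear (p 1 - p 0) = l (p 1) - l (p 0) := l.linearMap_vsub (p 1) (p 0)
  have h2 : l.linear (p 2 - p 0) = l (p 2) - l (p 0) := l.linearMap_vsub (p 2) (p 0)
  rw [h, AffineMap.map_vadd, map_add, map_smul, map_smul, h1, h2]
  simp only [smul_eq_mul, vadd_eq_add]
  ring

/-- the substitution polynomials -/
noncomputable def sub (p : Fin 3 → E2) (i : Fin 2) : MvPolynomial (Fin 2) ℝ :=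
  MvPolynomial.X 0 * MvPolynomial.C (p 1 i - p 0 i)
    + MvPolynomial.X 1 * MvPolynomial.C (p 2 i - p 0 i) + MvPolynomial.C (p 0 i)

lemma sub_degree (p : Fin 3 → E2) (i : Fin 2) : (sub p i).totalDegree ≤ 1 := by
  have h : ∀ (j : Fin 2) (a : ℝ),
      (MvPolynomial.X j * MvPolynomial.C a : MvPolynomial (Fin 2) ℝ).totalDegree ≤ 1 := by
    intro j a
    refine (MvPolynomial.totalDegree_mul _ _).trans ?_
    simp
  unfold sub
  refine (MvPolynomial.totalDegree_add _ _).trans (max_le ?_ (by simp))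
  exact (MvPolynomial.totalDegree_add _ _).trans (max_le (h _ _) (h _ _))

lemma ev_bind (p : Fin 3 → E2) (q : MvPolynomial (Fin 2) ℝ) (x : E2) :
    ev (MvPolynomial.bind₁ (sub p) q) x = ev q (Phi p x) := by
  unfold ev
  rw [← MvPolynomial.coe_aeval_eq_eval, ← MvPolynomial.coe_aeval_eq_eval, RingHom.coe_coe,
    RingHom.coe_coe, MvPolynomial.aeval_bind₁]
  congr 2
  ext i
  simp [sub, Phi_apply]

/-- reference bubble -/
noncomputable def psih : MvPolynomial (Fin 2) ℝ :=
  MvPolynomial.C 27 * (MvPolynomial.C 1 - MvPolynomial.X 0 - MvPolynomial.X 1)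
    * MvPolynomial.X 0 * MvPolynomial.X 1

lemma ev_psih (x : E2) : ev psih x = 27 * (1 - x 0 - x 1) * x 0 * x 1 := by
  simp [ev, psih]

lemma ev_mul (P Q : MvPolynomial (Fin 2) ℝ) (x : E2) : ev (P * Q) x = ev P x * ev Q x := by
  simp [ev]

lemma psih_ne : psih ≠ 0 := by
  intro h
  have := ev_psih !₂[1/3, 1/3]
  rw [h] at this
  norm_num [ev] at this

lemma opNorm_bound (c : E2) (r : ℝ) (hr : 0 ≤ r) (l : E2 →ᵃ[ℝ] ℝ)
    (h : ∀ y ∈ Metric.closedBall c r, 0 ≤ l y ∧ l y ≤ 1) :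
    r * ‖LinearMap.toContinuousLinearMap l.linear‖ ≤ 1 := by
  rcases hr.eq_or_lt with rfl | hr
  · simp
  have : ‖LinearMap.toContinuousLinearMap l.linear‖ ≤ 1 / r := by
    refine ContinuousLinearMap.opNorm_le_bound _ (by positivity) fun v => ?_
    rcases eq_or_ne v 0 with rfl | hv
    · simp
    have hv' : 0 < ‖v‖ := norm_pos_iff.2 hv
    have h0 := h c (Metric.mem_closedBall_self hr.le)
    have h1 := h ((r / ‖v‖) • v + c) (by
      rw [Metric.mem_closedBall, dist_eq_norm, add_sub_cancel_right, norm_smul, Real.norm_eq_abs,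
        abs_of_pos (by positivity), div_mul_cancel₀ _ hv'.ne'])
    have h2 : l ((r / ‖v‖) • v + c) = (r / ‖v‖) * l.linear v + l c := by
      rw [← vadd_eq_add, AffineMap.map_vadd, map_smul]
      simp
    rw [h2] at h1
    have h3 : |(r / ‖v‖) * l.linear v| ≤ 1 := abs_le.2 ⟨by linarith, by linarith⟩
    rw [abs_mul, abs_of_pos (by positivity)] at h3
    simp only [LinearMap.coe_toContinuousLinearMap', Real.norm_eq_abs]
    calc |l.linear v| = (r / ‖v‖ * |l.linear v|) * (‖v‖ / r) := by field_simp
      _ ≤ 1 * (‖v‖ / r) := by gcongr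
      _ = 1 / r * ‖v‖ := by ring
  calc r * _ ≤ r * (1 / r) := by gcongr
    _ = 1 := by field_simp

lemma grad_bound (p : Fin 3 → E2) (lam : Fin 3 → (E2 →ᵃ[ℝ] ℝ))
    (h1 : ∀ x, lam 1 (Phi p x) = x 0) (h2 : ∀ x, lam 2 (Phi p x) = x 1)
    (r : ℝ) (hr : 0 ≤ r)
    (hl1 : r * ‖LinearMap.toContinuousLinearMap (lam 1).linear‖ ≤ 1)
    (hl2 : r * ‖LinearMap.toContinuousLinearMap (lam 2).linear‖ ≤ 1)
    (F : E2 → ℝ) (P : MvPolynomial (Fin 2) ℝ) (hF : ∀ x, F (Phi p x) = ev P x) (x : E2) :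
    r ^ 2 * ‖gradient F (Phi p x)‖ ^ 2 ≤ 2 * (ev (MvPolynomial.pderiv 0 P) x ^ 2
      + ev (MvPolynomial.pderiv 1 P) x ^ 2) := by
  set l1 := LinearMap.toContinuousLinearMap (lam 1).linear with hl1d
  set l2 := LinearMap.toContinuousLinearMap (lam 2).linear with hl2d
  have hinj : Function.Injective (Phi p) := by
    intro a b hab
    ext i
    fin_cases i
    · have := h1 a; rw [hab, h1] at this; exact this.symm
    · have := h2 a; rw [hab, h2] at this; exact this.symm
  have hAinj : Function.Injective (Alin p).toLinearMap := by
    intro a b hab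
    apply hinj
    have : Alin p a = Alin p b := hab
    simp [Phi, this]
  have hAsurj := LinearMap.injective_iff_surjective.1 hAinj
  have hsurj : Function.Surjective (Phi p) := by
    intro y
    obtain ⟨x, hx⟩ := hAsurj (y - p 0)
    have hx' : Alin p x = y - p 0 := hx
    exact ⟨x, by simp [Phi, hx']⟩
  let e0 : E2 := !₂[1, 0]
  let e1 : E2 := !₂[0, 1]
  let B : E2 →L[ℝ] E2 := l1.smulRight e0 + l2.smulRight e1
  let Λ : E2 → E2 := fun y => B y + (lam 1 0 • e0 + lam 2 0 • e1)
  have hlam : ∀ (l : E2 →ᵃ[ℝ] ℝ) (y : E2), l y = l.linear y + l 0 := by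
    intro l y
    have := congrFun l.decomp y
    simpa using this
  have hΛ : ∀ x, Λ (Phi p x) = x := by
    intro x
    have e1' := hlam (lam 1) (Phi p x)
    have e2' := hlam (lam 2) (Phi p x)
    rw [h1] at e1'
    rw [h2] at e2'
    ext i
    fin_cases i
    · simp [Λ, B, e0, e1, hl1d, ← e1']
    · simp [Λ, B, e0, e1, hl2d, ← e2']
  have hFΛ : F = fun y => ev P (Λ y) := by
    ext y
    obtain ⟨x, rfl⟩ := hsurj y
    rw [hF, hΛ]
  have hd : HasFDerivAt Λ B (Phi p x) := B.hasFDerivAt.add_const _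
  have hP := hasFDerivAt_ev P (Λ (Phi p x))
  have hD := hP.comp (Phi p x) hd
  rw [hΛ] at hD
  set d0 := ev (MvPolynomial.pderiv 0 P) x
  set d1 := ev (MvPolynomial.pderiv 1 P) x
  have hn : ‖gradient F (Phi p x)‖ = ‖d0 • l1 + d1 • l2‖ := by
    rw [gradient, LinearIsometryEquiv.norm_map, hFΛ]
    have : fderiv ℝ (fun y => ev P (Λ y)) (Phi p x) = d0 • l1 + d1 • l2 := by
      refine HasFDerivAt.fderiv (hD.congr_fderiv ?_)
      ext v
      simp [B, pr_apply, e0, e1]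
    rw [this]
  have hb : r * ‖gradient F (Phi p x)‖ ≤ |d0| + |d1| := by
    rw [hn]
    calc r * ‖d0 • l1 + d1 • l2‖ ≤ r * (|d0| * ‖l1‖ + |d1| * ‖l2‖) := by
          gcongr
          refine (norm_add_le _ _).trans ?_
          rw [norm_smul, norm_smul, Real.norm_eq_abs, Real.norm_eq_abs]
      _ = |d0| * (r * ‖l1‖) + |d1| * (r * ‖l2‖) := by ring
      _ ≤ |d0| * 1 + |d1| * 1 := by gcongr
      _ = _ := by ring
  rw [← mul_pow]
  calc (r * ‖gradient F (Phi p x)‖) ^ 2 ≤ (|d0| + |d1|) ^ 2 := by gcongr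
    _ ≤ 2 * (|d0| ^ 2 + |d1| ^ 2) := by nlinarith [sq_nonneg (|d0| - |d1|)]
    _ = _ := by rw [sq_abs, sq_abs]

lemma change_var (p : Fin 3 → E2) (hinj : Function.Injective (Phi p)) (g : E2 → ℝ) :
    ∫ x in convexHull ℝ (Set.range p), g x = |(Alin p).det| * ∫ x, g (Phi p x) ∂mu := by
  rw [← image_Phi, integral_image_eq_integral_abs_det_fderiv_smul (f := Phi p) volume
    isClosed_That.measurableSet (f' := fun _ => Alin p)
    (fun x _ => ((Alin p).hasFDerivAt.add_const (p 0)).hasFDerivWithinAt) hinj.injOn]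
  simp only [smul_eq_mul]
  rw [integral_const_mul]
  rfl

end Bubble

open Bubble in
/-- Lemma 3.1 (interior bubble functions), second estimate, triangle form:
for every degree `k` and shape-regularity parameter `γ > 0` there is `C > 0`
such that for every nondegenerate triangle `T = conv{p₀, p₁, p₂} ⊆ ℝ²`
containing a ball of radius `γ · h_T` (inradius ≥ γ h_T), with barycentric
coordinates `lam i`, and every bivariate polynomial `q` of total degree ≤ `k`,
`C⁻¹ ‖q‖_{L²(T)} ≤ ‖ψ_T q‖_{L²(T)} + h_T ‖∇(ψ_T q)‖_{L²(T)} ≤ C ‖q‖_{L²(T)}`,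
where `ψ_T = 27 λ₀ λ₁ λ₂`. -/
theorem stmt_7 (k : ℕ) (γ : ℝ) (hγ : 0 < γ) :
    ∃ C : ℝ, 0 < C ∧
      ∀ p : Fin 3 → EuclideanSpace ℝ (Fin 2),
        AffineIndependent ℝ p →
        (∃ c : EuclideanSpace ℝ (Fin 2),
          Metric.closedBall c (γ * Metric.diam (convexHull ℝ (Set.range p)))
            ⊆ convexHull ℝ (Set.range p)) →
        ∀ lam : Fin 3 → (EuclideanSpace ℝ (Fin 2) →ᵃ[ℝ] ℝ),
          (∀ i j, lam i (p j) = if i = j then 1 else 0) →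
          ∀ q : MvPolynomial (Fin 2) ℝ, q.totalDegree ≤ k →
            (C⁻¹ * Real.sqrt (∫ x in convexHull ℝ (Set.range p),
                  (MvPolynomial.eval (fun i => x i) q) ^ 2)
              ≤ Real.sqrt (∫ x in convexHull ℝ (Set.range p),
                    ((27 * lam 0 x * lam 1 x * lam 2 x)
                      * MvPolynomial.eval (fun i => x i) q) ^ 2)
                + Metric.diam (convexHull ℝ (Set.range p)) *
                  Real.sqrt (∫ x in convexHull ℝ (Set.range p),
                    ‖gradient (fun y : EuclideanSpace ℝ (Fin 2) =>
                        (27 * lam 0 y * lam 1 y * lam 2 y)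
                          * MvPolynomial.eval (fun i => y i) q) x‖ ^ 2))
            ∧ (Real.sqrt (∫ x in convexHull ℝ (Set.range p),
                    ((27 * lam 0 x * lam 1 x * lam 2 x)
                      * MvPolynomial.eval (fun i => x i) q) ^ 2)
                + Metric.diam (convexHull ℝ (Set.range p)) *
                  Real.sqrt (∫ x in convexHull ℝ (Set.range p),
                    ‖gradient (fun y : EuclideanSpace ℝ (Fin 2) =>
                        (27 * lam 0 y * lam 1 y * lam 2 y)
                          * MvPolynomial.eval (fun i => y i) q) x‖ ^ 2)
              ≤ C * Real.sqrt (∫ x in convexHull ℝ (Set.range p),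
                  (MvPolynomial.eval (fun i => x i) q) ^ 2)) := by
  let M := LinearMap.mulLeft ℝ psih
  obtain ⟨C0, hC0, H0⟩ := fin_bound k M LinearMap.id (mul_right_injective₀ psih_ne)
  obtain ⟨C1, hC1, H1⟩ := fin_bound k LinearMap.id M Function.injective_id
  obtain ⟨C2, hC2, H2⟩ := fin_bound k LinearMap.id
    ((MvPolynomial.pderiv (0 : Fin 2)).toLinearMap ∘ₗ M) Function.injective_id
  obtain ⟨C3, hC3, H3⟩ := fin_bound k LinearMap.id
    ((MvPolynomial.pderiv (1 : Fin 2)).toLinearMap ∘ₗ M) Function.injective_id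
  let K : ℝ := 2 * (C2 + C3) / γ ^ 2
  refine ⟨Real.sqrt C0 + Real.sqrt C1 + Real.sqrt K + 1, by positivity, ?_⟩
  rintro p - ⟨c, hc⟩ lam hlam q hq
  set h := Metric.diam (convexHull ℝ (Set.range p)) with hh
  have hh0 : 0 ≤ h := Metric.diam_nonneg
  have h0 : ∀ x, lam 0 (Phi p x) = 1 - x 0 - x 1 := by
    intro x; rw [lam_Phi]; simp [hlam]; ring
  have h1 : ∀ x, lam 1 (Phi p x) = x 0 := by
    intro x; rw [lam_Phi]; simp [hlam]
  have h2 : ∀ x, lam 2 (Phi p x) = x 1 := by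
    intro x; rw [lam_Phi]; simp [hlam]
  have hinj : Function.Injective (Phi p) := by
    intro a b hab
    ext i
    fin_cases i
    · have := h1 a; rw [hab, h1] at this; exact this.symm
    · have := h2 a; rw [hab, h2] at this; exact this.symm
  have hl1 : γ * h * ‖LinearMap.toContinuousLinearMap (lam 1).linear‖ ≤ 1 := by
    refine opNorm_bound c _ (by positivity) _ fun y hy => ?_
    have hy' := hc hy
    rw [← image_Phi] at hy'
    obtain ⟨x, ⟨hx0, hx1, hx2⟩, rfl⟩ := hy'
    rw [h1]
    constructor <;> linarith
  have hl2 : γ * h * ‖LinearMap.toContinuousLinearMap (lam 2).linear‖ ≤ 1 := by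
    refine opNorm_bound c _ (by positivity) _ fun y hy => ?_
    have hy' := hc hy
    rw [← image_Phi] at hy'
    obtain ⟨x, ⟨hx0, hx1, hx2⟩, rfl⟩ := hy'
    rw [h2]
    constructor <;> linarith
  set qh := MvPolynomial.bind₁ (sub p) q with hqh
  have hqd : qh.totalDegree ≤ k := (totalDegree_bind q _ (sub_degree p)).trans hq
  set F : E2 → ℝ := fun y => (27 * lam 0 y * lam 1 y * lam 2 y)
    * MvPolynomial.eval (fun i => y i) q with hFdef
  have hF : ∀ x, F (Phi p x) = ev (psih * qh) x := by
    intro x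
    rw [ev_mul, ev_psih, ev_bind, hFdef]
    simp only [h0, h1, h2]
    rfl
  have hg := grad_bound p lam h1 h2 (γ * h) (by positivity) hl1 hl2 F (psih * qh) hF
  have T0 := H0 qh hqd
  have T1 := H1 qh hqd
  have T2 := H2 qh hqd
  have T3 := H3 qh hqd
  simp only [M, LinearMap.id_apply, LinearMap.mulLeft_apply, LinearMap.comp_apply,
    Derivation.coeFn_coe] at T0 T1 T2 T3
  set D := |(Alin p).det| with hD
  have hD0 : 0 ≤ D := abs_nonneg _
  have I0 : ∫ x in convexHull ℝ (Set.range p), (MvPolynomial.eval (fun i => x i) q) ^ 2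
      = D * ∫ x, ev qh x ^ 2 ∂mu := by
    rw [change_var p hinj]
    simp only [hqh, ev_bind]
    rfl
  have I1 : ∫ x in convexHull ℝ (Set.range p), F x ^ 2
      = D * ∫ x, ev (psih * qh) x ^ 2 ∂mu := by
    rw [change_var p hinj]
    simp only [hF]
    rfl
  have I2 : ∫ x in convexHull ℝ (Set.range p), ‖gradient F x‖ ^ 2
      = D * ∫ x, ‖gradient F (Phi p x)‖ ^ 2 ∂mu := by
    rw [change_var p hinj]
  change _ * √_ ≤ √(∫ x in convexHull ℝ (Set.range p), F x ^ 2) + _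
    ∧ √(∫ x in convexHull ℝ (Set.range p), F x ^ 2) + _ ≤ _
  rw [I0, I1, I2]
  set J0 := ∫ x, ev qh x ^ 2 ∂mu
  set J1 := ∫ x, ev (psih * qh) x ^ 2 ∂mu
  have hJ0 : 0 ≤ J0 := integral_nonneg fun x => by positivity
  have G : (γ * h) ^ 2 * ∫ x, ‖gradient F (Phi p x)‖ ^ 2 ∂mu ≤ 2 * (C2 + C3) * J0 := by
    have i0 := integrable_cont ((continuous_ev (MvPolynomial.pderiv 0 (psih * qh))).pow 2)
    have i1 := integrable_cont ((continuous_ev (MvPolynomial.pderiv 1 (psih * qh))).pow 2)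
    rw [← integral_const_mul]
    calc _ ≤ ∫ x, 2 * (ev (MvPolynomial.pderiv 0 (psih * qh)) x ^ 2
              + ev (MvPolynomial.pderiv 1 (psih * qh)) x ^ 2) ∂mu := by
          refine integral_mono_of_nonneg (Filter.Eventually.of_forall fun x => ?_)
            ((i0.add i1).const_mul 2) (Filter.Eventually.of_forall hg)
          simp only [Pi.zero_apply]
          positivity
      _ = 2 * ((∫ x, ev (MvPolynomial.pderiv 0 (psih * qh)) x ^ 2 ∂mu)
              + ∫ x, ev (MvPolynomial.pderiv 1 (psih * qh)) x ^ 2 ∂mu) := by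
          rw [integral_const_mul]
          congr 1
          exact integral_add i0 i1
      _ ≤ 2 * (C2 * J0 + C3 * J0) := by gcongr
      _ = _ := by ring
  set J2 := ∫ x, ‖gradient F (Phi p x)‖ ^ 2 ∂mu
  have G' : h ^ 2 * (D * J2) ≤ K * (D * J0) := by
    have : h ^ 2 * J2 ≤ K * J0 := by
      simp only [K]
      rw [div_mul_eq_mul_div, le_div_iff₀ (by positivity)]
      linarith
    nlinarith
  have S2 : h * √(D * J2) ≤ √K * √(D * J0) := by
    rw [← Real.sqrt_mul (by positivity)]
    calc h * √(D * J2) = √(h ^ 2 * (D * J2)) := by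
          rw [Real.sqrt_mul (sq_nonneg h), Real.sqrt_sq hh0]
      _ ≤ _ := Real.sqrt_le_sqrt G'
  have S1 : √(D * J1) ≤ √C1 * √(D * J0) := by
    rw [← Real.sqrt_mul (by positivity)]
    exact Real.sqrt_le_sqrt (by nlinarith)
  have S0 : √(D * J0) ≤ √C0 * √(D * J1) := by
    rw [← Real.sqrt_mul (by positivity)]
    exact Real.sqrt_le_sqrt (by nlinarith)
  have n0 := Real.sqrt_nonneg C0
  have n1 := Real.sqrt_nonneg C1
  have n2 := Real.sqrt_nonneg K
  have m0 := Real.sqrt_nonneg (D * J0)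
  have m1 := Real.sqrt_nonneg (D * J1)
  have m2 : 0 ≤ h * √(D * J2) := by positivity
  constructor
  · rw [inv_mul_le_iff₀ (by positivity)]
    nlinarith [mul_nonneg n0 m2, mul_nonneg n1 m2, mul_nonneg n2 m2, mul_nonneg n1 m1,
      mul_nonneg n2 m1]
  · nlinarith [mul_nonneg n0 m0]
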